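/- Let h ∈ (0,1), α ∈ (0, 1/2], κ ∈ (0,1), K̃ > 0, and λ₁, λ₂, λ₃ > 0. Let D : ℝⁿ → ℝⁿ satisfy D(0) = 0 and be κ-Lipschitz, and let b : ℝⁿ × ℝⁿ → ℝⁿ and σ : ℝⁿ × ℝⁿ → ℝ^{n×m} satisfy, at a given pair (x,y) ∈ ℝⁿ × ℝⁿ: ⟨x − D(y), b(x,y)⟩ ≤ K̃(1 + |x|² + |y|²) and ‖σ(x,y)‖² ≤ −λ₁ − λ₂|x|² + λ₃|y|². Set b_h(x,y) = b(x,y)/(1 + h^α|b(x,y)|), z = x − D(y), and for any Δ ∈ ℝ^m set z' = z + b_h(x,y)h + σ(x,y)Δ. Then |z'|² ≤ |z|² + (h^{1−2α} − λ₁ + 2K̃)h + (−λ₂ + 2K̃)|x|²h + (λ₃ + 2K̃)|y|²h + 2⟨z, σ(x,y)Δ⟩ + 2⟨b_h(x,y)h, σ(x,y)Δ⟩ + ‖σ(x,y)‖²(|Δ|² − h). -/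

import Mathlib

open scoped RealInnerProductSpace

/-- The squared Hilbert–Schmidt (Frobenius) norm of an `n × m` real matrix. -/
noncomputable def hsNormSq {n m : ℕ} (A : Matrix (Fin n) (Fin m) ℝ) : ℝ := ∑ i, ∑ j, (A i j) ^ 2

/-- Matrix–vector multiplication as a map between Euclidean spaces. -/
noncomputable def mulVecE {n m : ℕ} (A : Matrix (Fin n) (Fin m) ℝ)
    (v : EuclideanSpace ℝ (Fin m)) : EuclideanSpace ℝ (Fin n) :=
  (WithLp.equiv 2 (Fin n → ℝ)).symm (A.mulVec ((WithLp.equiv 2 (Fin m → ℝ)) v))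

/-- The tamed drift `b_h(x,y) = b(x,y)/(1 + h^α |b(x,y)|)`. -/
noncomputable def tamedDrift {n : ℕ} (h α : ℝ)
    (b : EuclideanSpace ℝ (Fin n) → EuclideanSpace ℝ (Fin n) → EuclideanSpace ℝ (Fin n))
    (x y : EuclideanSpace ℝ (Fin n)) : EuclideanSpace ℝ (Fin n) :=
  (1 + h ^ α * ‖b x y‖)⁻¹ • b x y

/-- The Hilbert–Schmidt bound for the matrix–vector product. -/
theorem norm_mulVecE_sq_le {n m : ℕ} (A : Matrix (Fin n) (Fin m) ℝ)
    (v : EuclideanSpace ℝ (Fin m)) : ‖mulVecE A v‖ ^ 2 ≤ hsNormSq A * ‖v‖ ^ 2 := by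
  rw [EuclideanSpace.real_norm_sq_eq, EuclideanSpace.real_norm_sq_eq, hsNormSq, Finset.sum_mul]
  refine Finset.sum_le_sum fun i _ => ?_
  exact Finset.sum_mul_sq_le_sq_mul_sq Finset.univ (fun j => A i j) (fun j => v j)

/-- One-step estimate for the tamed EM scheme: with `z = x - D(y)` and
`z' = z + b_h(x,y) h + σ(x,y) Δ`, one has
`|z'|² ≤ |z|² + (h^{1-2α} - λ₁ + 2K̃)h + (-λ₂ + 2K̃)|x|²h + (λ₃ + 2K̃)|y|²h
  + 2⟨z, σΔ⟩ + 2⟨b_h h, σΔ⟩ + ‖σ‖²(|Δ|² - h)`. -/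
theorem one_step_estimate {n m : ℕ} (h α : ℝ)
    (hh : h ∈ Set.Ioo (0 : ℝ) 1) (hα : α ∈ Set.Ioc (0 : ℝ) (1 / 2))
    (κ : ℝ) (hκ : κ ∈ Set.Ioo (0 : ℝ) 1)
    (Ktil lam₁ lam₂ lam₃ : ℝ) (hKtil : 0 < Ktil)
    (hlam₁ : 0 < lam₁) (hlam₂ : 0 < lam₂) (hlam₃ : 0 < lam₃)
    (D : EuclideanSpace ℝ (Fin n) → EuclideanSpace ℝ (Fin n)) (hD0 : D 0 = 0)
    (hDlip : ∀ x x' : EuclideanSpace ℝ (Fin n), ‖D x - D x'‖ ≤ κ * ‖x - x'‖)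
    (b : EuclideanSpace ℝ (Fin n) → EuclideanSpace ℝ (Fin n) → EuclideanSpace ℝ (Fin n))
    (σ : EuclideanSpace ℝ (Fin n) → EuclideanSpace ℝ (Fin n) → Matrix (Fin n) (Fin m) ℝ)
    (x y : EuclideanSpace ℝ (Fin n))
    (hb_bound : ⟪x - D y, b x y⟫ ≤ Ktil * (1 + ‖x‖ ^ 2 + ‖y‖ ^ 2))
    (hσ_bound : hsNormSq (σ x y) ≤ -lam₁ - lam₂ * ‖x‖ ^ 2 + lam₃ * ‖y‖ ^ 2)
    (Δ : EuclideanSpace ℝ (Fin m)) :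
    ‖(x - D y) + h • tamedDrift h α b x y + mulVecE (σ x y) Δ‖ ^ 2
      ≤ ‖x - D y‖ ^ 2 + (h ^ (1 - 2 * α) - lam₁ + 2 * Ktil) * h
        + (-lam₂ + 2 * Ktil) * ‖x‖ ^ 2 * h + (lam₃ + 2 * Ktil) * ‖y‖ ^ 2 * h
        + 2 * ⟪x - D y, mulVecE (σ x y) Δ⟫
        + 2 * ⟪h • tamedDrift h α b x y, mulVecE (σ x y) Δ⟫
        + hsNormSq (σ x y) * (‖Δ‖ ^ 2 - h) := by
  have h0 : 0 < h := hh.1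
  have hc : 0 < h ^ α := Real.rpow_pos_of_pos h0 α
  have hbn : 0 ≤ ‖b x y‖ := norm_nonneg _
  have hcb : 0 ≤ h ^ α * ‖b x y‖ := mul_nonneg hc.le hbn
  have hpos : 0 < 1 + h ^ α * ‖b x y‖ := by linarith
  have hS := norm_mulVecE_sq_le (σ x y) Δ
  -- the tamed drift bound
  have hT : ‖h • tamedDrift h α b x y‖ ^ 2 ≤ h ^ (1 - 2 * α) * h := by
    have e : h ^ (1 - 2 * α) * (h ^ α) ^ 2 = h := by
      rw [← Real.rpow_natCast (h ^ α) 2, ← Real.rpow_mul h0.le, ← Real.rpow_add h0]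
      have : 1 - 2 * α + α * ((2 : ℕ) : ℝ) = 1 := by push_cast; ring
      rw [this, Real.rpow_one]
    have hp : 0 < h ^ (1 - 2 * α) := Real.rpow_pos_of_pos h0 _
    have h1 : (1 + h ^ α * ‖b x y‖)⁻¹ * (h ^ α * ‖b x y‖) ≤ 1 := by
      rw [inv_mul_le_iff₀ hpos]; linarith
    have h2 : 0 ≤ (1 + h ^ α * ‖b x y‖)⁻¹ * (h ^ α * ‖b x y‖) := by positivity
    have h3 : ((1 + h ^ α * ‖b x y‖)⁻¹ * (h ^ α * ‖b x y‖)) ^ 2 ≤ 1 := pow_le_one₀ h2 h1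
    have h4 : ‖h • tamedDrift h α b x y‖ ^ 2
        = h * h * ((1 + h ^ α * ‖b x y‖)⁻¹ * ‖b x y‖) ^ 2 := by
      unfold tamedDrift
      rw [norm_smul, norm_smul, Real.norm_of_nonneg h0.le,
        Real.norm_of_nonneg (inv_nonneg.2 hpos.le)]
      ring
    rw [h4]
    calc h * h * ((1 + h ^ α * ‖b x y‖)⁻¹ * ‖b x y‖) ^ 2
        = h * (h ^ (1 - 2 * α) * (h ^ α) ^ 2) * ((1 + h ^ α * ‖b x y‖)⁻¹ * ‖b x y‖) ^ 2 := by
          rw [e]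
      _ = h ^ (1 - 2 * α) * h * ((1 + h ^ α * ‖b x y‖)⁻¹ * (h ^ α * ‖b x y‖)) ^ 2 := by ring
      _ ≤ h ^ (1 - 2 * α) * h * 1 := mul_le_mul_of_nonneg_left h3 (by positivity)
      _ = _ := mul_one _
  -- the one-sided bound
  have hI : ⟪x - D y, h • tamedDrift h α b x y⟫ ≤ h * (Ktil * (1 + ‖x‖ ^ 2 + ‖y‖ ^ 2)) := by
    unfold tamedDrift
    rw [real_inner_smul_right, real_inner_smul_right]
    refine mul_le_mul_of_nonneg_left ?_ h0.le
    rw [inv_mul_le_iff₀ hpos]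
    have : 0 ≤ Ktil * (1 + ‖x‖ ^ 2 + ‖y‖ ^ 2) := by positivity
    nlinarith [mul_nonneg hcb this]
  have hσh := mul_le_mul_of_nonneg_right hσ_bound h0.le
  rw [norm_add_sq_real, norm_add_sq_real, inner_add_left]
  linarith
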